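/- There is a universal constant C > 0 such that every finite simple graph G on n ≥ 2 vertices admits a partition of its vertex set into nonempty clusters V_1, …, V_k with the following two properties: (i) each cluster has strong diameter at most C·log n, i.e., for each i the induced subgraph G[V_i] is connected and dist_{G[V_i]}(u,v) ≤ C·log n for all u, v ∈ V_i; and (ii) for every vertex v, the neighbors of v meet at most C·log n distinct clusters (i.e., |{ i : V_i contains a neighbor of v }| ≤ C·log n). -/

import Mathlib

open Finset in
lemma ldc_geom_aux (m : ℕ) : ∀ L : ℕ, ∑ k ∈ Finset.range L, ((1/2:ℝ)^(k+1) *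
    (if m + 1 ≤ k then 0 else if m ≤ k + 2 then 8/7 else 1)) ≤ 1 := by
  induction m with
  | zero =>
    intro L
    have : ∀ L : ℕ, ∑ k ∈ Finset.range L, ((1/2:ℝ)^(k+1) *
      (if 0 + 1 ≤ k then 0 else if 0 ≤ k + 2 then 8/7 else 1)) ≤ 4/7 := by
      intro L
      rcases L with _ | L
      · norm_num
      rw [Finset.sum_range_succ', Finset.sum_eq_zero]
      · norm_num
      · intro k _; simp
    linarith [this L]
  | succ m ih =>
    intro L
    rcases L with _ | L
    · norm_num
    rw [Finset.sum_range_succ']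
    by_cases hm : 2 ≤ m
    · have h := ih L
      have e : ∑ k ∈ Finset.range L, ((1/2:ℝ)^(k+1+1) *
        (if m + 1 + 1 ≤ k + 1 then 0 else if m + 1 ≤ k + 1 + 2 then 8/7 else 1))
        = 1/2 * ∑ k ∈ Finset.range L, ((1/2:ℝ)^(k+1) *
        (if m + 1 ≤ k then 0 else if m ≤ k + 2 then 8/7 else 1)) := by
        rw [Finset.mul_sum]
        refine Finset.sum_congr rfl fun k _ => ?_
        have h1 : (m + 1 + 1 ≤ k + 1) ↔ (m + 1 ≤ k) := by omega
        have h2 : (m + 1 ≤ k + 1 + 2) ↔ (m ≤ k + 2) := by omega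
        simp only [h1, h2]
        ring
      rw [e]
      have : ¬ (m + 1 ≤ 0 + 2) := by omega
      simp only [this]
      norm_num
      norm_num at h
      linarith
    · have h3 : ∑ k ∈ Finset.range L, ((1/2:ℝ)^(k+1+1) *
        (if m + 1 + 1 ≤ k + 1 then 0 else if m + 1 ≤ k + 1 + 2 then 8/7 else 1)) ≤ 3/7 := by
        rcases L with _ | L
        · norm_num
        rw [Finset.sum_range_succ']
        rcases L with _ | L
        · interval_cases m <;> norm_num
        rw [Finset.sum_range_succ', Finset.sum_eq_zero]
        · interval_cases m <;> norm_num
        · intro k _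
          rw [if_pos (by omega)]; simp
      have : (if m + 1 + 1 ≤ 0 then (0:ℝ) else if m + 1 ≤ 0 + 2 then 8/7 else 1) ≤ 8/7 := by
        rw [if_neg (by omega)]; split_ifs <;> norm_num
      have h4 : (1/2:ℝ)^(0+1) = 1/2 := by norm_num
      rw [h4]
      linarith

lemma ldc_total (L : ℕ) : ∑ k ∈ Finset.range L, (1/2:ℝ)^(k+1) = 1 - (1/2)^L := by
  induction L with
  | zero => simp
  | succ L ih => rw [Finset.sum_range_succ, ih]; ring

lemma ldc_shifts {V : Type} [Fintype V] (d : V → V → ℕ) (L : ℕ)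
    (hL : 2 * Fintype.card V ≤ 2 ^ L) (hV : 0 < Fintype.card V) :
    ∃ r : V → ℕ, (∀ u, r u < L) ∧ ∀ v M, M < L → (∀ w, r w ≤ M + d w v) →
      (Finset.univ.filter fun w => M + d w v ≤ r w + 2).card ≤ 12 * L := by
  classical
  by_contra hcon
  push Not at hcon
  let g : ℕ → ℕ → ℝ := fun m k => if m + 1 ≤ k then 0 else if m ≤ k + 2 then 8/7 else 1
  have hg0 : ∀ m k, 0 ≤ g m k := by
    intro m k; simp only [g]; split_ifs <;> norm_num
  let Ω := Fintype.piFinset (fun _ : V => Finset.range L)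
  have hA : ∑ r ∈ Ω, ∏ u, (1/2:ℝ)^(r u + 1) = (1 - (1/2)^L)^(Fintype.card V) := by
    rw [← Finset.prod_univ_sum (fun _ : V => Finset.range L) (fun _ k => (1/2:ℝ)^(k+1))]
    simp only [ldc_total, Finset.prod_const, Finset.card_univ]
  have hLr : 2 * (Fintype.card V : ℝ) ≤ 2 ^ L := by exact_mod_cast hL
  have hp : (0:ℝ) < 2 ^ L := by positivity
  have hA2 : (1/2:ℝ) ≤ ∑ r ∈ Ω, ∏ u, (1/2:ℝ)^(r u + 1) := by
    rw [hA]
    have h1 : ((1/2:ℝ))^L ≤ 1 := pow_le_one₀ (by norm_num) (by norm_num)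
    have := one_add_mul_le_pow (a := -(1/2:ℝ)^L) (by linarith) (Fintype.card V)
    rw [← sub_eq_add_neg] at this
    refine le_trans ?_ this
    have h2 : (Fintype.card V : ℝ) * (1/2)^L ≤ 1/2 := by
      rw [one_div, inv_pow, ← div_eq_mul_inv, div_le_iff₀ hp]
      linarith
    linarith
  have hB : ∀ v M, ∑ r ∈ Ω, ∏ u, ((1/2:ℝ)^(r u + 1) * g (M + d u v) (r u)) ≤ 1 := by
    intro v M
    rw [← Finset.prod_univ_sum (fun _ : V => Finset.range L)
      (fun u k => (1/2:ℝ)^(k+1) * g (M + d u v) k)]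
    apply Finset.prod_le_one
    · intro u _
      exact Finset.sum_nonneg fun k _ => mul_nonneg (by positivity) (hg0 _ _)
    · intro u _
      exact ldc_geom_aux _ _
  have hC : ∀ r ∈ Ω, (8/7:ℝ)^(12*L) * ∏ u, (1/2:ℝ)^(r u + 1) ≤
      ∑ v, ∑ M ∈ Finset.range L, ∏ u, ((1/2:ℝ)^(r u + 1) * g (M + d u v) (r u)) := by
    intro r hr
    have hr' : ∀ u, r u < L := by
      intro u; exact Finset.mem_range.1 (Fintype.mem_piFinset.1 hr u)
    obtain ⟨v, M, hM, hw, hc⟩ := hcon r hr'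
    have hnn : ∀ v M, 0 ≤ ∏ u, ((1/2:ℝ)^(r u + 1) * g (M + d u v) (r u)) := fun v M =>
      Finset.prod_nonneg fun u _ => mul_nonneg (by positivity) (hg0 _ _)
    calc _ ≤ ∏ u, ((1/2:ℝ)^(r u + 1) * g (M + d u v) (r u)) := by
          rw [Finset.prod_mul_distrib, mul_comm]
          refine mul_le_mul_of_nonneg_left ?_ (Finset.prod_nonneg fun u _ => by positivity)
          have : ∀ u, g (M + d u v) (r u) = if M + d u v ≤ r u + 2 then (8/7:ℝ) else 1 := by
            intro u
            have := hw u
            simp only [g]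
            rw [if_neg (by omega)]
          simp only [this]
          rw [Finset.prod_ite]
          simp only [Finset.prod_const, one_pow, mul_one]
          exact pow_le_pow_right₀ (by norm_num) hc.le
      _ ≤ ∑ M ∈ Finset.range L, ∏ u, ((1/2:ℝ)^(r u + 1) * g (M + d u v) (r u)) :=
          Finset.single_le_sum (f := fun M => ∏ u, ((1/2:ℝ)^(r u + 1) * g (M + d u v) (r u)))
            (fun M _ => hnn v M) (Finset.mem_range.2 hM)
      _ ≤ _ := Finset.single_le_sum
            (f := fun v => ∑ M ∈ Finset.range L, ∏ u, ((1/2:ℝ)^(r u + 1) * g (M + d u v) (r u)))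
            (fun v _ => Finset.sum_nonneg fun M _ => hnn v M) (Finset.mem_univ v)
  have hD := Finset.sum_le_sum hC
  rw [← Finset.mul_sum, Finset.sum_comm] at hD
  have hE : ∑ v, ∑ r ∈ Ω, ∑ M ∈ Finset.range L,
      ∏ u, ((1/2:ℝ)^(r u + 1) * g (M + d u v) (r u)) ≤ Fintype.card V * L := by
    calc _ ≤ ∑ v : V, (L:ℝ) := by
          refine Finset.sum_le_sum fun v _ => ?_
          rw [Finset.sum_comm]
          calc _ ≤ ∑ M ∈ Finset.range L, (1:ℝ) := Finset.sum_le_sum fun M _ => hB v M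
            _ = L := by simp
      _ = _ := by simp
  have hF : (2:ℝ)^L * 2^L ≤ (8/7:ℝ)^(12*L) := by
    rw [← mul_pow, pow_mul]
    exact pow_le_pow_left₀ (by norm_num) (by norm_num) L
  have hG : (L:ℝ) < 2^L := by exact_mod_cast Nat.lt_two_pow_self
  have hV' : (0:ℝ) < Fintype.card V := by exact_mod_cast hV
  have hH : (2:ℝ)^L * 2^L * (1/2) ≤ Fintype.card V * L := by
    refine le_trans (mul_le_mul hF hA2 (by norm_num) (by positivity)) (hD.trans hE)
  nlinarith [mul_le_mul_of_nonneg_right hLr (Nat.cast_nonneg (α := ℝ) L)]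

lemma ldc_walk {V : Type} (G : SimpleGraph V) (c : V → V) (u : V) :
    ∀ (v : V) (q : G.Walk v u) (hv : c v = u)
      (_ : ∀ v v' (q' : G.Walk v' u) (h : G.Adj v v'),
        (SimpleGraph.Walk.cons h q').length = G.dist v u → c v = u →
          c v' = u ∧ q'.length = G.dist v' u)
      (_ : q.length = G.dist v u),
      ∃ (hu : c u = u) (p : (G.induce {x | c x = u}).Walk ⟨v, hv⟩ ⟨u, hu⟩), p.length = q.length := by
  intro v q
  induction q with
  | nil => intro hv _ _; exact ⟨hv, .nil, rfl⟩
  | @cons a b w h q ih =>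
    intro hv H hq
    obtain ⟨h1, h2⟩ := H _ _ q h hq hv
    obtain ⟨hu, p, hp⟩ := ih h1 H h2
    have h' : (G.induce {x | c x = w}).Adj ⟨a, hv⟩ ⟨b, h1⟩ := h
    exact ⟨hu, .cons h' p, by simp [hp]⟩

/-- **LDC decomposition existence.** There is a universal constant `C > 0` such that every
finite simple graph `G` on `n ≥ 2` vertices admits a partition of its vertex set into nonempty
clusters, each of strong diameter at most `C · log n` (the induced subgraph is connected and
has hop-distance at most `C · log n` between any two of its vertices), and such that the
neighbors of any vertex meet at most `C · log n` distinct clusters. -/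
theorem ldc_decomposition_exists :
    ∃ C : ℝ, 0 < C ∧
      ∀ (V : Type) [Fintype V] (G : SimpleGraph V),
        2 ≤ Fintype.card V →
        ∃ (k : ℕ) (P : Fin k → Set V),
          (∀ i, (P i).Nonempty) ∧
          (∀ i j, i ≠ j → Disjoint (P i) (P j)) ∧
          (⋃ i, P i) = Set.univ ∧
          (∀ i, (G.induce (P i)).Connected ∧
            ∀ u v : P i,
              (((G.induce (P i)).dist u v : ℝ)) ≤ C * Real.log (Fintype.card V)) ∧
          (∀ v : V,
            (({i | ∃ u ∈ P i, G.Adj v u}.ncard : ℝ)) ≤ C * Real.log (Fintype.card V)) := by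
  classical
  refine ⟨72, by norm_num, ?_⟩
  intro V _ G hn
  set n := Fintype.card V with hndef
  obtain ⟨L, hLdef⟩ : ∃ L, L = Nat.log 2 n + 2 := ⟨_, rfl⟩
  have hL2 : 2 * n ≤ 2 ^ L := by
    have := Nat.lt_pow_succ_log_self (b := 2) (by norm_num) n
    rw [hLdef, show Nat.log 2 n + 2 = (Nat.log 2 n).succ + 1 from rfl, pow_succ]
    omega
  have hLlog : (L : ℝ) ≤ 6 * Real.log n := by
    have h2 : (1/2:ℝ) < Real.log 2 := by linarith [Real.log_two_gt_d9]
    have hlogn : Real.log 2 ≤ Real.log n :=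
      Real.log_le_log (by norm_num) (by exact_mod_cast hn)
    have hp : ((2:ℝ) ^ Nat.log 2 n) ≤ n := by
      exact_mod_cast Nat.pow_log_le_self 2 (by omega)
    have h3 := Real.log_le_log (by positivity) hp
    rw [Real.log_pow] at h3
    rw [hLdef]
    push_cast
    have : (0:ℝ) ≤ (Nat.log 2 n : ℝ) := Nat.cast_nonneg _
    nlinarith
  let d : V → V → ℕ := fun u v => if G.Reachable u v then G.dist u v else L
  have hd0 : ∀ u, d u u = 0 := by intro u; simp [d]
  have hdL : ∀ u v v', G.Adj v v' → d u v ≤ d u v' + 1 := by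
    intro u v v' h
    have hr : G.Reachable u v ↔ G.Reachable u v' :=
      ⟨fun h1 => h1.trans h.reachable, fun h1 => h1.trans h.symm.reachable⟩
    simp only [d, hr]
    split_ifs with h1
    · have h2 := h.symm.reachable.dist_triangle_right u
      rwa [SimpleGraph.dist_eq_one_iff_adj.2 h.symm] at h2
    · omega
  obtain ⟨r, hrL, hr⟩ := ldc_shifts d L hL2 (by omega)
  let idx := Fintype.equivFin V
  let X : V → V → ℤ := fun u v => (r u : ℤ) - d u v
  let key : V → V → ℤ := fun u v => (n : ℤ) * X u v + (idx u : ℕ)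
  have : Nonempty V := Fintype.card_pos_iff.1 (by omega)
  have hidx : ∀ u, ((idx u : ℕ) : ℤ) < n := fun u => by exact_mod_cast (idx u).2
  have hidx0 : ∀ u, (0:ℤ) ≤ ((idx u : ℕ) : ℤ) := fun u => by positivity
  have hnpos : (0:ℤ) < n := by exact_mod_cast (by omega : 0 < n)
  have hinj : ∀ v u w, key u v = key w v → u = w := by
    intro v u w h
    have h1 := hidx u
    have h2 := hidx w
    have h3 := hidx0 u
    have h4 := hidx0 w
    simp only [key] at h
    have hX : X u v = X w v := by
      rcases lt_trichotomy (X u v) (X w v) with hlt | heq | hlt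
      · nlinarith
      · exact heq
      · nlinarith
    rw [hX] at h
    have : (idx u : ℕ) = idx w := by omega
    exact idx.injective (Fin.ext this)
  have hmax : ∀ v, ∃ u, ∀ w, key w v ≤ key u v := fun v => Finite.exists_max (fun u => key u v)
  choose c hc using hmax
  have hcX : ∀ v w, X w v ≤ X (c v) v := by
    intro v w
    have h := hc v w
    have h1 := hidx (c v)
    have h4 := hidx0 w
    simp only [key] at h
    by_contra hlt
    push Not at hlt
    nlinarith
  have hc0 : ∀ v, d (c v) v ≤ r (c v) := by
    intro v
    have := hcX v v
    simp only [X, hd0] at this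
    omega
  have hcr : ∀ v, G.Reachable (c v) v := by
    intro v
    by_contra h
    have h1 := hc0 v
    have h2 := hrL (c v)
    simp only [d, h, if_false] at h1
    omega
  have hcd : ∀ v, G.dist (c v) v < L := by
    intro v
    have h1 := hc0 v
    have h2 := hrL (c v)
    simp only [d, hcr v, if_true] at h1
    omega
  have hstep : ∀ u v v' (q' : G.Walk v' u) (h : G.Adj v v'),
        (SimpleGraph.Walk.cons h q').length = G.dist v u → c v = u →
          c v' = u ∧ q'.length = G.dist v' u := by
    intro u v v' q' h hl hcv
    have hl1 : q'.length + 1 = G.dist v u := by simpa using hl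
    have h1 : G.dist v' u ≤ q'.length := SimpleGraph.dist_le q'
    have h2 : G.dist v u ≤ G.dist v' u + 1 := by
      have h2 := h.reachable.dist_triangle_left u
      rw [SimpleGraph.dist_eq_one_iff_adj.2 h] at h2
      omega
    refine ⟨?_, by omega⟩
    have hru' : G.Reachable u v' := q'.reachable.symm
    have hru : G.Reachable u v := hru'.trans h.symm.reachable
    have hdd : d u v = d u v' + 1 := by
      simp only [d, hru, hru', if_true]
      rw [SimpleGraph.dist_comm, SimpleGraph.dist_comm (u := u)]
      omega
    apply hinj v'
    apply le_antisymm _ (hc v' u)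
    have h3 := hc v (c v')
    rw [hcv] at h3
    have h4 := hdL (c v') v v' h
    have h5 : X (c v') v' ≤ X (c v') v + 1 := by simp only [X]; omega
    have h6 : X u v' = X u v + 1 := by simp only [X]; omega
    simp only [key] at h3 ⊢
    rw [h6]
    nlinarith
  have hwalk : ∀ u v (hv : c v = u), ∃ (hu : c u = u)
      (p : (G.induce {x | c x = u}).Walk ⟨v, hv⟩ ⟨u, hu⟩), p.length < L := by
    intro u v hv
    have hr1 : G.Reachable v u := by rw [← hv]; exact (hcr v).symm
    obtain ⟨q, hq⟩ := hr1.exists_walk_length_eq_dist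
    obtain ⟨hu, p, hp⟩ := ldc_walk G c u v q hv (hstep u) hq
    refine ⟨hu, p, ?_⟩
    rw [hp, hq, SimpleGraph.dist_comm]
    have := hcd v
    rwa [hv] at this
  let S : Finset V := Finset.univ.image c
  let e : Fin S.card ≃ S := S.equivFin.symm
  refine ⟨S.card, fun i => {x | c x = (e i : V)}, ?_, ?_, ?_, ?_, ?_⟩
  · intro i
    obtain ⟨v, _, hv⟩ := Finset.mem_image.1 (e i).2
    exact ⟨v, hv⟩
  · intro i j hij
    rw [Set.disjoint_left]
    intro x hx hy
    apply hij
    apply e.injective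
    apply Subtype.ext
    exact (Eq.symm hx).trans hy
  · apply Set.eq_univ_of_forall
    intro x
    rw [Set.mem_iUnion]
    refine ⟨e.symm ⟨c x, Finset.mem_image_of_mem c (Finset.mem_univ x)⟩, ?_⟩
    simp
  · intro i
    beta_reduce
    generalize hz : (e i : V) = z
    have hzi : ∃ v, c v = z := by
      obtain ⟨v, _, hv⟩ := Finset.mem_image.1 (e i).2
      exact ⟨v, hv.trans hz⟩
    obtain ⟨v0, hv0⟩ := hzi
    have key2 : ∀ u v : {x | c x = z}, ∃ p : (G.induce {x | c x = z}).Walk u v,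
        p.length ≤ 2 * L := by
      rintro ⟨u, hu⟩ ⟨v, hv⟩
      obtain ⟨_, p, hp⟩ := hwalk z u hu
      obtain ⟨_, p', hp'⟩ := hwalk z v hv
      refine ⟨p.append p'.reverse, ?_⟩
      rw [SimpleGraph.Walk.length_append, SimpleGraph.Walk.length_reverse]
      omega
    refine ⟨?_, ?_⟩
    · have : Nonempty {x | c x = z} := ⟨⟨v0, hv0⟩⟩
      refine SimpleGraph.Connected.mk ?_
      intro u v
      obtain ⟨p, _⟩ := key2 u v
      exact p.reachable
    · intro u v
      obtain ⟨p, hp⟩ := key2 u v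
      have h1 := (SimpleGraph.dist_le p).trans hp
      have h2 : (((G.induce {x | c x = z}).dist u v : ℕ) : ℝ) ≤ 2 * L := by exact_mod_cast h1
      have : (0:ℝ) ≤ L := Nat.cast_nonneg _
      linarith
  · intro v
    obtain ⟨M, hM⟩ : ∃ M : ℕ, M = r (c v) - d (c v) v := ⟨_, rfl⟩
    have hMX : (M : ℤ) = X (c v) v := by
      have := hc0 v
      simp only [X]; omega
    have hML : M < L := by have := hrL (c v); omega
    have hb := hr v M hML (by
      intro w
      have := hcX v w
      rw [← hMX] at this
      simp only [X] at this
      omega)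
    have hle : ({i | ∃ u ∈ {x | c x = (e i : V)}, G.Adj v u} : Set (Fin S.card)).ncard ≤ 12 * L := by
      rw [← Set.ncard_coe_finset] at hb
      refine le_trans ?_ hb
      refine Set.ncard_le_ncard_of_injOn (fun i => (e i : V)) ?_ ?_ (Finset.finite_toSet _)
      · rintro i ⟨u, hu, hadj⟩
        have hu' : c u = (e i : V) := hu
        simp only [Finset.coe_filter, Finset.mem_univ, true_and, Set.mem_setOf_eq]
        rw [← hu']
        have h1 := hcX u (c v)
        have h2 := hdL (c v) u v hadj.symm
        have h3 := hdL (c u) v u hadj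
        simp only [X] at h1 hMX
        omega
      · intro i _ j _ hij
        exact e.injective (Subtype.ext hij)
    have h2 : ((({i | ∃ u ∈ {x | c x = (e i : V)}, G.Adj v u} : Set (Fin S.card)).ncard : ℕ) : ℝ)
      ≤ 12 * L := by exact_mod_cast hle
    linarith
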